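/- arXiv:2603.17581 — 4 statements merged into one kernel-verified Lean document; each statement's English description precedes it below -/
import Mathlib

section
/- Suppose the dual numbers ℝ[ε] (ε² = 0) carry a linear order making them an ordered ring, which extends the standard order of ℝ (i.e. for real a, b, the embedded elements satisfy a ≤ b in ℝ[ε] iff a ≤ b in ℝ), and suppose ε > 0. Then the order is the lexicographic order: a₁ + b₁ε ≤ a₂ + b₂ε if and only if a₁ < a₂, or (a₁ = a₂ and b₁ ≤ b₂). -/
open DualNumber TrivSqZeroExt

/-!
The order is determined by its nonnegative cone, so it suffices to see that `0 ≤ a + bε` iff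
`0 < a`, or `a = 0` and `0 ≤ b`. Nonnegative real multiples of `ε` are nonnegative, being products
of nonnegative elements. If `a > 0` but `a + bε` were not nonnegative, then `-a - bε` would be
nonnegative, hence so would `ε (-a - bε) = -aε`; as `aε` is nonnegative too, `aε = 0`, which is
absurd. The converse follows because the lexicographic cone contains `x` or `-x` for every `x`,
while the given cone contains both only for `x = 0`.
-/

/-- **Uniqueness of the order on the dual numbers.**
If the dual numbers `ℝ[ε]` carry a linear order which is translation invariant,
satisfies that products of nonnegative elements are nonnegative, extends the
standard order of `ℝ`, and makes `ε` positive, then the order is the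
lexicographic one: `a₁ + b₁ε ≤ a₂ + b₂ε` iff `a₁ < a₂`, or `a₁ = a₂` and
`b₁ ≤ b₂`. -/
theorem dual_order_unique (L : LinearOrder (ℝ[ε]))
    (h_add : ∀ a b c : ℝ[ε], L.le a b → L.le (a + c) (b + c))
    (h_mul : ∀ a b : ℝ[ε], L.le 0 a → L.le 0 b → L.le 0 (a * b))
    (h_ext : ∀ a b : ℝ, (L.le (inl a) (inl b) ↔ a ≤ b))
    (h_eps : L.lt 0 ε) :
    ∀ a₁ b₁ a₂ b₂ : ℝ,
      L.le (inl a₁ + b₁ • ε) (inl a₂ + b₂ • ε) ↔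
        a₁ < a₂ ∨ (a₁ = a₂ ∧ b₁ ≤ b₂) := by
  have heps : L.le 0 ε := ((L.lt_iff_le_not_ge _ _).1 h_eps).1
  have h_sub : ∀ x y : ℝ[ε], L.le x y ↔ L.le 0 (y - x) := fun x y =>
    ⟨fun h => by simpa [sub_eq_add_neg] using h_add x y (-x) h,
      fun h => by simpa using h_add 0 (y - x) x h⟩
  have h_anti : ∀ x : ℝ[ε], L.le 0 x → L.le 0 (-x) → x = 0 := fun x h h' =>
    L.le_antisymm _ _ ((h_sub x 0).2 (by simpa using h')) h
  have h_total : ∀ x : ℝ[ε], L.le 0 x ∨ L.le 0 (-x) := fun x =>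
    (L.le_total 0 x).imp id fun h => by simpa using (h_sub x 0).1 h
  have h_inf : ∀ b : ℝ, 0 ≤ b → L.le 0 (b • ε) := fun b hb => by
    have h := h_mul (inl b) ε (by simpa using (h_ext 0 b).2 hb) heps
    rwa [inl_mul_eq_smul] at h
  have h_pos : ∀ a b : ℝ, 0 < a → L.le 0 (inl a + b • ε) := fun a b ha => by
    refine (h_total _).resolve_right fun h => ?_
    have h₁ := h_mul _ _ heps h
    have h₂ : (ε : ℝ[ε]) * -(inl a + b • ε) = -(a • ε) := by
      ext <;> simp
    rw [h₂] at h₁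
    have h₃ := congrArg snd (h_anti _ (h_inf a ha.le) h₁)
    simp at h₃
    exact ha.ne' h₃
  have h_lex : ∀ a b : ℝ, 0 < a ∨ (a = 0 ∧ 0 ≤ b) → L.le 0 (inl a + b • ε) := by
    rintro a b (ha | ⟨rfl, hb⟩)
    · exact h_pos a b ha
    · simpa using h_inf b hb
  have h_cone : ∀ a b : ℝ, L.le 0 (inl a + b • ε) ↔ 0 < a ∨ (a = 0 ∧ 0 ≤ b) := by
    refine fun a b => ⟨fun h => ?_, h_lex a b⟩
    by_contra hn
    have hneg : 0 < -a ∨ (-a = 0 ∧ 0 ≤ -b) := by grind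
    have h' := h_lex _ _ hneg
    have he : (inl (-a) + (-b) • ε : ℝ[ε]) = -(inl a + b • ε) := by
      ext <;> simp
    rw [he] at h'
    have h0 := h_anti _ h h'
    have hfst := congrArg fst h0
    have hsnd := congrArg snd h0
    simp at hfst hsnd
    exact hn (Or.inr ⟨hfst, hsnd.ge⟩)
  intro a₁ b₁ a₂ b₂
  have he : (inl a₂ + b₂ • ε - (inl a₁ + b₁ • ε) : ℝ[ε]) =
      inl (a₂ - a₁) + (b₂ - b₁) • ε := by
    ext <;> simp
  rw [h_sub, he, h_cone, sub_pos, sub_nonneg, sub_eq_zero, eq_comm]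
end

section
/- A square matrix M over the dual-complex numbers satisfies Mᴴ·M = I (dual-complex unitarity, with ᴴ the conjugate transpose using the star (z + tε)* = z̄ + t̄ε) if and only if there exist a complex matrix U with Uᴴ·U = I and a complex Hermitian matrix H (Hᴴ = H) such that M = (I + iε·H)·U, i.e. the significant part of M is U and its infinitesimal part is i·H·U. -/
/-!
Write `M = A + εB` with `A`, `B` complex. Since `ε² = 0`, the equation `Mᴴ * M = 1` splits into
`Aᴴ * A = 1` and `Aᴴ * B + Bᴴ * A = 0` (`unitary_iff_parts`). As `A` is a square matrix, it is then
unitary on both sides, and conjugating the second equation by `A` says that `B * Aᴴ` is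
skew-Hermitian, i.e. that `H = -i B Aᴴ` is Hermitian; moreover `i H A = B`. Conversely, for
`B = i H U` the two terms of the second equation are `i Uᴴ H U` and `-i Uᴴ H U`.
-/

open DualNumber TrivSqZeroExt Matrix

/-- Componentwise star (conjugation) on dual-complex numbers:
`(z + tε)* = z̄ + t̄ε`. -/
noncomputable instance : Star ℂ[ε] :=
  ⟨fun w => inl (starRingEnd ℂ w.fst) + (starRingEnd ℂ w.snd) • ε⟩

/-- Separation of dual-complex unitarity into its significant and infinitesimal parts. -/
theorem unitary_iff_parts {n : ℕ} (M : Matrix (Fin n) (Fin n) ℂ[ε]) :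
    Mᴴ * M = 1 ↔ (M.map fst)ᴴ * M.map fst = 1 ∧
      (M.map fst)ᴴ * M.map snd + (M.map snd)ᴴ * M.map fst = 0 := by
  have hfst (w : ℂ[ε]) : (star w).fst = star w.fst := by
    change (inl (starRingEnd ℂ w.fst) + (starRingEnd ℂ w.snd) • ε : ℂ[ε]).fst = _
    simp
  have hsnd (w : ℂ[ε]) : (star w).snd = star w.snd := by
    change (inl (starRingEnd ℂ w.fst) + (starRingEnd ℂ w.snd) • ε : ℂ[ε]).snd = _
    simp
  have h1 : (Mᴴ * M).map fst = (M.map fst)ᴴ * M.map fst := by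
    ext i j
    simp [Matrix.mul_apply, fst_sum, hfst]
  have h2 : (Mᴴ * M).map snd = (M.map fst)ᴴ * M.map snd + (M.map snd)ᴴ * M.map fst := by
    ext i j
    simp [Matrix.mul_apply, snd_sum, hfst, hsnd, Finset.sum_add_distrib, mul_comm, add_comm]
  have e1 : (1 : Matrix (Fin n) (Fin n) ℂ[ε]).map fst = 1 := by
    ext i j
    by_cases h : i = j <;> simp [Matrix.one_apply, h]
  have e2 : (1 : Matrix (Fin n) (Fin n) ℂ[ε]).map snd = 0 := by
    ext i j
    by_cases h : i = j <;> simp [h]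
  rw [← h1, ← h2]
  constructor
  · intro h
    rw [h]
    exact ⟨e1, e2⟩
  · rintro ⟨h, h'⟩
    rw [← e1] at h
    rw [← e2] at h'
    ext i j
    · exact congrFun (congrFun h i) j
    · exact congrFun (congrFun h' i) j

/-- **Characterization of dual-complex unitaries.**
A square dual-complex matrix `M` satisfies `Mᴴ·M = I` iff there exist a complex
unitary `U` and a complex Hermitian `H` such that `M = U + ε·(i·H·U)`, i.e. the
significant part of `M` is `U` and its infinitesimal part is `i·H·U`. -/
theorem dualComplex_unitary_iff (n : ℕ) (M : Matrix (Fin n) (Fin n) ℂ[ε]) :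
    Mᴴ * M = 1 ↔
      ∃ (U H : Matrix (Fin n) (Fin n) ℂ), Uᴴ * U = 1 ∧ Hᴴ = H ∧
        M = Matrix.of fun i j => inl (U i j) + (Complex.I * (H * U) i j) • ε := by
  rw [unitary_iff_parts]
  constructor
  · rintro ⟨hA, hB⟩
    have hA' : M.map fst * (M.map fst)ᴴ = 1 := mul_eq_one_comm.mp hA
    have hM : M = Matrix.of fun i j => inl (M.map fst i j) + (M.map snd i j) • ε := by
      ext i j <;> simp
    generalize M.map fst = A at *
    generalize M.map snd = B at *
    have hskew : B * Aᴴ + A * Bᴴ = 0 := by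
      calc B * Aᴴ + A * Bᴴ = (A * Aᴴ) * B * Aᴴ + A * Bᴴ * (A * Aᴴ) := by simp [hA']
        _ = A * (Aᴴ * B + Bᴴ * A) * Aᴴ := by noncomm_ring
        _ = 0 := by simp [hB]
    refine ⟨A, (-Complex.I) • (B * Aᴴ), hA, ?_, ?_⟩
    · rw [conjTranspose_smul, conjTranspose_mul, conjTranspose_conjTranspose,
        eq_neg_of_add_eq_zero_left hskew]
      simp
    · rw [hM]
      have : (-Complex.I) • (B * Aᴴ) * A = (-Complex.I) • B := by
        rw [Matrix.smul_mul, Matrix.mul_assoc, hA, Matrix.mul_one]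
      rw [this]
      ext i j <;> simp [← mul_assoc]
  · rintro ⟨U, H, hU, hH, rfl⟩
    have h1 : (Matrix.of fun i j =>
        (inl (U i j) + (Complex.I * (H * U) i j) • ε : ℂ[ε])).map fst = U := by
      ext i j
      simp
    have h2 : (Matrix.of fun i j =>
        (inl (U i j) + (Complex.I * (H * U) i j) • ε : ℂ[ε])).map snd
          = Complex.I • (H * U) := by
      ext i j
      simp
    rw [h1, h2]
    refine ⟨hU, ?_⟩
    rw [conjTranspose_smul, conjTranspose_mul, hH]
    simp [Matrix.mul_assoc]
end

section
/- Every dual-complex unitary matrix is unitarily diagonalizable with eigenvalues of the form e^{iθ}(1 + iμε): if U_ε is a square matrix over the dual-complex numbers with U_εᴴ·U_ε = I, then there exist a dual-complex matrix P with Pᴴ·P = I and real numbers θ_j, μ_j such that U_ε = P·D·Pᴴ, where D is the diagonal matrix with j-th diagonal entry e^{iθ_j}·(1 + i·μ_j·ε). -/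
/-!
Write `U = U₀ + U₁ε`. The hypothesis says that `U₀` is unitary and `U₀ᴴU₁` is skew-Hermitian.
Diagonalize `U₀ = Q D Qᴴ` (`normal_diag`) and put `V = Qᴴ U₁ Q`. Conjugating `D` by `1 + εA`, with
`A` skew-Hermitian, adds `AD - DA` to its `ε`-part; its entries are `A j k * (l k - l j)`, where
`D = diagonal l`, so a suitable `A` removes every entry of `V` that joins distinct eigenvalues of
`D` (`first_order`). What remains is `D * iH` with `H` Hermitian and block diagonal along the
eigenspaces of `D`, so some unitary `R` commuting with `D` diagonalizes `H` to `diagonal μ`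
(`block_diag`). Then `P = Q (1 + εA) R` is unitary and diagonalizes `U`, with eigenvalues
`l j * (1 + i μ j ε)`, and `|l j| = 1` gives `l j = exp (i arg (l j))`.

Identities between dual-complex matrices are checked on the `fst` and `snd` parts (`dual_ext`).
-/

open DualNumber TrivSqZeroExt Matrix

lemma hermitian_diag {ι : Type*} [Fintype ι] [DecidableEq ι] (B : Matrix ι ι ℂ)
    (hB : B.IsHermitian) :
    ∃ (Q : Matrix ι ι ℂ) (b : ι → ℝ), Qᴴ * Q = 1 ∧
      B = Q * diagonal (fun j => (b j : ℂ)) * Qᴴ := by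
  refine ⟨hB.eigenvectorUnitary, hB.eigenvalues, ?_, ?_⟩
  · exact Unitary.coe_star_mul_self hB.eigenvectorUnitary
  · conv_lhs => rw [hB.spectral_theorem]
    rfl

/-- A Hermitian matrix that is block diagonal with respect to the level sets of `a` can be
diagonalized by a unitary that commutes with `diagonal a`: diagonalize each block separately. -/
lemma block_diag {ι : Type*} [Fintype ι] [DecidableEq ι] (a : ι → ℂ) (B : Matrix ι ι ℂ)
    (hB : B.IsHermitian) (h : ∀ j k, a j ≠ a k → B j k = 0) :
    ∃ (Q : Matrix ι ι ℂ) (b : ι → ℝ), Qᴴ * Q = 1 ∧ diagonal a * Q = Q * diagonal a ∧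
      B = Q * diagonal (fun j => (b j : ℂ)) * Qᴴ := by
  classical
  let f : ι → Set.range a := Set.rangeFactorization a
  choose E b hE hb using fun c : Set.range a =>
    hermitian_diag (B.submatrix (fun j : {j // f j = c} => j.1) (fun j => j.1)) (hB.submatrix _)
  -- `e` reorders the indices so that each level set of `a` forms one block.
  let e : (Σ c : Set.range a, {j // f j = c}) ≃ ι := Equiv.sigmaFiberEquiv f
  have ha : ∀ x, a (e x) = x.1 := by
    rintro ⟨c, j, hj⟩
    exact congrArg Subtype.val hj
  have hBe : B.submatrix e e = blockDiagonal' E * diagonal (fun x => (b x.1 x.2 : ℂ)) *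
      (blockDiagonal' E)ᴴ := by
    rw [blockDiagonal'_conjTranspose,
      ← blockDiagonal'_diagonal (fun c j => (b c j : ℂ)),
      ← blockDiagonal'_mul, ← blockDiagonal'_mul]
    simp_rw [← hb]
    ext ⟨c, j⟩ ⟨d, k⟩
    by_cases hcd : c = d
    · subst hcd
      rw [blockDiagonal'_apply_eq]
      rfl
    · rw [blockDiagonal'_apply_ne _ _ _ hcd]
      apply h
      have h1 := ha ⟨c, j⟩
      have h2 := ha ⟨d, k⟩
      rw [h1, h2]
      exact fun h => hcd (Subtype.ext h)
  refine ⟨(blockDiagonal' E).submatrix e.symm e.symm,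
    fun j => b (e.symm j).1 (e.symm j).2, ?_, ?_, ?_⟩
  · rw [conjTranspose_submatrix, submatrix_mul_equiv, blockDiagonal'_conjTranspose,
      ← blockDiagonal'_mul]
    simp_rw [hE]
    have := blockDiagonal'_one (m' := fun c => {j // f j = c}) (α := ℂ)
    erw [this]
    simp
  · ext j k
    obtain ⟨⟨c, j⟩, rfl⟩ := e.surjective j
    obtain ⟨⟨d, k⟩, rfl⟩ := e.surjective k
    rw [diagonal_mul, mul_diagonal, ha, ha]
    by_cases hcd : c = d
    · subst hcd
      exact mul_comm _ _
    · simp [blockDiagonal'_apply_ne _ _ _ hcd]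
  · have : B = (B.submatrix e e).submatrix e.symm e.symm := by simp
    conv_lhs => rw [this, hBe]
    rw [← submatrix_mul_equiv (e₂ := e.symm), ← submatrix_mul_equiv (e₂ := e.symm),
      submatrix_diagonal_equiv]
    rfl

/-- The Hermitian matrices `U + Uᴴ` and `i(Uᴴ - U)` commute, so in an eigenbasis of the first one
the second one is block diagonal, and `block_diag` diagonalizes both. -/
lemma normal_diag {ι : Type*} [Fintype ι] [DecidableEq ι] (U : Matrix ι ι ℂ)
    (hU : Uᴴ * U = U * Uᴴ) :
    ∃ (Q : Matrix ι ι ℂ) (l : ι → ℂ), Qᴴ * Q = 1 ∧ U = Q * diagonal l * Qᴴ := by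
  let A := U + Uᴴ
  let B := Complex.I • (Uᴴ - U)
  have hA : A.IsHermitian := by simp [A, IsHermitian, add_comm]
  have hB : B.IsHermitian := by
    simp only [B, IsHermitian, conjTranspose_smul, conjTranspose_sub, conjTranspose_conjTranspose]
    simp [smul_sub]
    abel
  have hAB : A * B = B * A := by
    simp only [A, B, mul_smul_comm, smul_mul_assoc]
    simp only [add_mul, mul_add, sub_mul, mul_sub, hU]
    congr 1; abel
  have hUAB : U = (1 / 2 : ℂ) • (A + Complex.I • B) := by
    simp only [A, B, smul_smul, Complex.I_mul_I]
    module
  obtain ⟨W, α, hW, hWA⟩ := hermitian_diag A hA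
  have hW' : W * Wᴴ = 1 := mul_eq_one_comm.mp hW
  have hc : diagonal (fun j => (α j : ℂ)) * (Wᴴ * B * W) =
      (Wᴴ * B * W) * diagonal (fun j => (α j : ℂ)) := by
    have h1 : diagonal (fun j => (α j : ℂ)) = Wᴴ * A * W := by
      rw [hWA]; simp only [Matrix.mul_assoc, hW]; simp [← Matrix.mul_assoc, hW]
    rw [h1]
    calc _ = Wᴴ * (A * (W * Wᴴ) * B) * W := by simp only [Matrix.mul_assoc]
      _ = Wᴴ * (B * (W * Wᴴ) * A) * W := by rw [hW', mul_one, mul_one, hAB]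
      _ = _ := by simp only [Matrix.mul_assoc]
  obtain ⟨R, β, hR, hRα, hRB⟩ := block_diag (fun j => (α j : ℂ)) (Wᴴ * B * W)
    (isHermitian_conjTranspose_mul_mul W hB) (by
      intro j k hjk
      have := congrFun (congrFun hc j) k
      rw [diagonal_mul, mul_diagonal, mul_comm, ← sub_eq_zero, ← mul_sub] at this
      exact (mul_eq_zero.mp this).resolve_right (sub_ne_zero.mpr hjk))
  have hR' : R * Rᴴ = 1 := mul_eq_one_comm.mp hR
  refine ⟨W * R, fun j => (1 / 2 : ℂ) * (α j + Complex.I * β j), ?_, ?_⟩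
  · rw [conjTranspose_mul, Matrix.mul_assoc, ← Matrix.mul_assoc Wᴴ, hW, one_mul, hR]
  · have hd : diagonal (fun j => (1 / 2 : ℂ) * (α j + Complex.I * β j)) = (1 / 2 : ℂ) •
        (diagonal (fun j => (α j : ℂ)) + Complex.I • diagonal (fun j => (β j : ℂ))) := by
      ext i j; by_cases hij : i = j <;> simp [hij, diagonal]
    have hA2 : A = W * R * diagonal (fun j => (α j : ℂ)) * (W * R)ᴴ := by
      rw [Matrix.mul_assoc W, ← hRα, conjTranspose_mul, hWA]
      calc _ = W * (diagonal (fun j => (α j : ℂ)) * 1) * Wᴴ := by rw [mul_one]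
        _ = _ := by rw [← hR']; simp only [Matrix.mul_assoc]
    have hB2 : B = W * R * diagonal (fun j => (β j : ℂ)) * (W * R)ᴴ := by
      calc B = (W * Wᴴ) * B * (W * Wᴴ) := by simp [hW']
        _ = W * (Wᴴ * B * W) * Wᴴ := by simp only [Matrix.mul_assoc]
        _ = _ := by rw [hRB, conjTranspose_mul]; simp only [Matrix.mul_assoc]
    rw [hd, mul_smul_comm, smul_mul_assoc, mul_add, add_mul, ← hA2,
      mul_smul_comm, smul_mul_assoc, ← hB2, ← hUAB]

lemma dual_ext {n : ℕ} {M N : Matrix (Fin n) (Fin n) ℂ[ε]} (h0 : M.map fst = N.map fst)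
    (h1 : M.map snd = N.map snd) : M = N := by
  ext i j
  · exact congrFun (congrFun h0 i) j
  · exact congrFun (congrFun h1 i) j

lemma map_fst_mul {n : ℕ} (M N : Matrix (Fin n) (Fin n) ℂ[ε]) :
    (M * N).map fst = M.map fst * N.map fst := by
  ext i j
  simp [mul_apply, TrivSqZeroExt.fst_sum]

lemma map_snd_mul {n : ℕ} (M N : Matrix (Fin n) (Fin n) ℂ[ε]) :
    (M * N).map snd = M.map fst * N.map snd + M.map snd * N.map fst := by
  ext i j
  simp [mul_apply, TrivSqZeroExt.snd_sum, Finset.sum_add_distrib, mul_comm]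

lemma map_fst_conjTranspose {n : ℕ} (M : Matrix (Fin n) (Fin n) ℂ[ε]) :
    Mᴴ.map fst = (M.map fst)ᴴ := by
  ext i j
  change fst (inl (starRingEnd ℂ (M j i).fst) + (starRingEnd ℂ (M j i).snd) • (ε : ℂ[ε])) =
    starRingEnd ℂ (M j i).fst
  simp

lemma map_snd_conjTranspose {n : ℕ} (M : Matrix (Fin n) (Fin n) ℂ[ε]) :
    Mᴴ.map snd = (M.map snd)ᴴ := by
  ext i j
  change snd (inl (starRingEnd ℂ (M j i).fst) + (starRingEnd ℂ (M j i).snd) • (ε : ℂ[ε])) =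
    starRingEnd ℂ (M j i).snd
  simp

lemma map_fst_one {n : ℕ} :
    (1 : Matrix (Fin n) (Fin n) ℂ[ε]).map fst = (1 : Matrix (Fin n) (Fin n) ℂ) := by
  ext i j; by_cases h : i = j <;> simp [h, Matrix.one_apply]

lemma map_snd_one {n : ℕ} :
    (1 : Matrix (Fin n) (Fin n) ℂ[ε]).map snd = (0 : Matrix (Fin n) (Fin n) ℂ) := by
  ext i j; by_cases h : i = j <;> simp [h]

lemma unitary_conj_cancel {ι : Type*} [Fintype ι] [DecidableEq ι] {Q : Matrix ι ι ℂ}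
    (hQ : Qᴴ * Q = 1) (M : Matrix ι ι ℂ) : Q * (Qᴴ * M * Q) * Qᴴ = M := by
  have hQ' : Q * Qᴴ = 1 := mul_eq_one_comm.mp hQ
  calc _ = (Q * Qᴴ) * M * (Q * Qᴴ) := by simp only [Matrix.mul_assoc]
    _ = M := by simp [hQ']

/-- The first-order perturbation `V` of the unitary `D = diagonal l` is an infinitesimal rotation
`A * D - D * A` of the eigenbasis, `A` being skew-Hermitian, plus `D * iH` with `H` Hermitian and
block diagonal along the eigenspaces of `D`. -/
lemma first_order {ι : Type*} [Fintype ι] [DecidableEq ι] (l : ι → ℂ)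
    (hl : ∀ j, star (l j) * l j = 1) (V : Matrix ι ι ℂ)
    (hV : (diagonal l)ᴴ * V + Vᴴ * diagonal l = 0) :
    ∃ A H : Matrix ι ι ℂ, Aᴴ = -A ∧ H.IsHermitian ∧ (∀ j k, l j ≠ l k → H j k = 0) ∧
      V = A * diagonal l - diagonal l * A + diagonal l * (Complex.I • H) := by
  have hl0 : ∀ j, l j ≠ 0 := fun j h => by simpa [h] using hl j
  have hl1 : ∀ j, star (l j) = (l j)⁻¹ := fun j => eq_inv_of_mul_eq_one_left (hl j)
  have hVe : ∀ j k, star (V k j) = -((l j)⁻¹ * V j k * (l k)⁻¹) := by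
    intro j k
    have := congrFun (congrFun hV j) k
    simp only [diagonal_conjTranspose, Matrix.add_apply, diagonal_mul, mul_diagonal, Matrix.zero_apply,
      Pi.star_apply, conjTranspose_apply, hl1] at this
    field_simp [hl0 j, hl0 k] at this ⊢
    linear_combination this
  -- Where `l j = l k`, division by zero makes the entry of `A` vanish, as it should.
  refine ⟨of fun j k => V j k / (l k - l j),
    of fun j k => if l j = l k then -Complex.I * (l j)⁻¹ * V j k else 0, ?_, ?_, ?_, ?_⟩
  · ext j k
    by_cases h : l j = l k
    · simp [h]
    · have h1 : l k - l j ≠ 0 := sub_ne_zero.mpr (Ne.symm h)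
      have h2 : (l j)⁻¹ - (l k)⁻¹ = (l k - l j) / (l j * l k) := by
        field_simp [hl0 j, hl0 k]
      simp only [conjTranspose_apply, of_apply, Matrix.neg_apply, star_div₀, star_sub, hl1, hVe, h2]
      field_simp [hl0 j, hl0 k]
  · ext j k
    by_cases h : l j = l k
    · have := hVe j k
      have hk := hl0 k
      simp only [conjTranspose_apply, of_apply, h, if_true, star_mul', star_neg, hVe, star_inv₀,
        hl1, Complex.star_def, Complex.conj_I]
      field_simp
    · simp [h, Ne.symm h]
  · intro j k h
    simp [h]
  · ext j k
    simp only [Matrix.add_apply, Matrix.sub_apply, mul_diagonal, diagonal_mul, of_apply, Matrix.smul_apply, smul_eq_mul]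
    by_cases h : l j = l k
    · have hk := hl0 k
      simp only [h, if_true]
      field_simp
      linear_combination (V j k) * Complex.I_sq
    · have h1 : l k - l j ≠ 0 := sub_ne_zero.mpr (Ne.symm h)
      simp only [h, if_false]
      field_simp
      ring

/-- **Spectral theorem for dual-complex unitaries.**
Every dual-complex unitary `U_ε` (i.e. `U_εᴴ·U_ε = I`) is unitarily
diagonalizable with eigenvalues `e^{iθⱼ}·(1 + i·μⱼ·ε)`: there are a
dual-complex matrix `P` with `Pᴴ·P = I` and reals `θⱼ, μⱼ` with
`U_ε = P·D·Pᴴ`, `D` the diagonal matrix of the above eigenvalues. -/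
theorem dualComplex_unitary_spectral (n : ℕ) (Uε : Matrix (Fin n) (Fin n) ℂ[ε])
    (hU : Uεᴴ * Uε = 1) :
    ∃ (P : Matrix (Fin n) (Fin n) ℂ[ε]) (θ μ : Fin n → ℝ),
      Pᴴ * P = 1 ∧
      Uε = P * Matrix.diagonal (fun j =>
        inl (Complex.exp (Complex.I * (θ j))) * (1 + (Complex.I * (μ j)) • ε)) * Pᴴ := by
  have hU0 := congrArg (fun M => M.map fst) hU
  have hU1 := congrArg (fun M => M.map snd) hU
  simp only [map_fst_mul, map_snd_mul, map_fst_conjTranspose, map_snd_conjTranspose, map_fst_one,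
    map_snd_one] at hU0 hU1
  set U₀ := Uε.map fst with hU₀
  set U₁ := Uε.map snd with hU₁
  obtain ⟨Q, l, hQ, hQU⟩ := normal_diag U₀ (hU0.trans (mul_eq_one_comm.mp hU0).symm)
  have hQ' : Q * Qᴴ = 1 := mul_eq_one_comm.mp hQ
  have hD : diagonal l = Qᴴ * U₀ * Q := by
    rw [hQU]
    simpa using (unitary_conj_cancel (Q := Qᴴ) (by simpa using hQ') (diagonal l)).symm
  have hl : ∀ j, star (l j) * l j = 1 := by
    have h : (diagonal l)ᴴ * diagonal l = 1 := by
      rw [hD]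
      calc _ = Qᴴ * (U₀ᴴ * (Q * Qᴴ) * U₀) * Q := by
            simp only [conjTranspose_mul, conjTranspose_conjTranspose, Matrix.mul_assoc]
        _ = 1 := by rw [hQ', mul_one, hU0, mul_one, hQ]
    intro j
    have := congrFun (congrFun h j) j
    simpa only [diagonal_conjTranspose, diagonal_mul_diagonal, diagonal_apply_eq, one_apply_eq,
      Pi.star_apply] using this
  -- `Qᴴ U₁ Q` is the first-order part seen in the eigenbasis of `U₀`.
  obtain ⟨A, H, hA, hH, hlH, hV⟩ := first_order l hl (Qᴴ * U₁ * Q) (by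
    rw [hD]
    calc _ = Qᴴ * (U₀ᴴ * (Q * Qᴴ) * U₁ + U₁ᴴ * (Q * Qᴴ) * U₀) * Q := by
          simp only [conjTranspose_mul, conjTranspose_conjTranspose, Matrix.mul_assoc,
            Matrix.mul_add, Matrix.add_mul]
      _ = 0 := by rw [hQ', mul_one, mul_one, hU1]; simp)
  obtain ⟨R, μ, hR, hlR, hRH⟩ := block_diag l H hH hlH
  have hR' : R * Rᴴ = 1 := mul_eq_one_comm.mp hR
  have hexp : ∀ j, Complex.exp (Complex.I * ((l j).arg : ℝ)) = l j := by
    intro j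
    have hn : ‖l j‖ = 1 := by
      have := congrArg norm (hl j)
      rw [norm_mul, norm_star, norm_one] at this
      nlinarith [norm_nonneg (l j)]
    have := Complex.norm_mul_exp_arg_mul_I (l j)
    rwa [hn, Complex.ofReal_one, one_mul, mul_comm] at this
  -- `P = Q (1 + εA) R`
  let P : Matrix (Fin n) (Fin n) ℂ[ε] := of fun i j => inl ((Q * R) i j) + inr ((Q * A * R) i j)
  have hP0 : P.map fst = Q * R := by ext i j; simp [P]
  have hP1 : P.map snd = Q * A * R := by ext i j; simp [P]
  refine ⟨P, fun j => (l j).arg, μ, dual_ext ?_ ?_, dual_ext ?_ ?_⟩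
  · rw [map_fst_mul, map_fst_conjTranspose, hP0, map_fst_one, conjTranspose_mul, Matrix.mul_assoc,
      ← Matrix.mul_assoc Qᴴ, hQ, one_mul, hR]
  · rw [map_snd_mul, map_fst_conjTranspose, map_snd_conjTranspose, hP0, hP1, map_snd_one]
    calc _ = Rᴴ * ((Qᴴ * Q) * A + Aᴴ * (Qᴴ * Q)) * R := by
          simp only [conjTranspose_mul, Matrix.mul_assoc, Matrix.mul_add, Matrix.add_mul]
      _ = 0 := by rw [hQ, hA]; simp
  all_goals
    set D := Matrix.diagonal (fun j =>
        inl (Complex.exp (Complex.I * ((l j).arg : ℝ))) * (1 + (Complex.I * (μ j)) • ε) :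
          Fin n → ℂ[ε]) with hDD
    have hD0 : D.map fst = diagonal l := by
      ext i j
      by_cases h : i = j <;> simp [hDD, h, hexp]
    have hD1 : D.map snd = diagonal l * (Complex.I • diagonal (fun j => (μ j : ℂ))) := by
      ext i j
      by_cases h : i = j <;> simp [hDD, h, hexp]
  · rw [map_fst_mul, map_fst_mul, map_fst_conjTranspose, hP0, hD0, Matrix.mul_assoc Q,
      ← hlR, ← hU₀, hQU]
    calc _ = Q * diagonal l * 1 * Qᴴ := by rw [mul_one]
      _ = _ := by rw [← hR']; simp only [conjTranspose_mul, Matrix.mul_assoc]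
  · rw [map_snd_mul, map_snd_mul, map_fst_mul, map_fst_conjTranspose, map_snd_conjTranspose, hP0,
      hP1, hD0, hD1, ← hU₁, ← unitary_conj_cancel hQ U₁, hV, hRH]
    have e1 : R * diagonal l * Rᴴ = diagonal l := by
      rw [← hlR, Matrix.mul_assoc, hR', mul_one]
    have e2 : diagonal l * (Complex.I • (R * diagonal (fun j => (μ j : ℂ)) * Rᴴ)) =
        R * (diagonal l * (Complex.I • diagonal (fun j => (μ j : ℂ)))) * Rᴴ := by
      rw [← Matrix.mul_assoc R, ← hlR]
      simp only [mul_smul_comm, smul_mul_assoc, Matrix.mul_assoc]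
    rw [e2]
    set M := diagonal l * (Complex.I • diagonal (fun j => (μ j : ℂ)))
    calc _ = Q * (A * (R * diagonal l * Rᴴ) + (R * diagonal l * Rᴴ) * Aᴴ + R * M * Rᴴ) * Qᴴ := by
          rw [e1, hA, mul_neg, sub_eq_add_neg]
      _ = _ := by
          simp only [conjTranspose_mul, Matrix.mul_assoc, Matrix.mul_add, Matrix.add_mul]
          abel
end

section
/- (Self-consistency of dual-complex measurement.) Let {M_m} be a finite family of square matrices over the dual-complex numbers with Σₘ M_mᴴ·M_m = I, and let ψ be a dual-complex vector with ⟨ψ, ψ⟩ = 1. Define p(m) = ⟨ψ, M_mᴴ·M_m·ψ⟩. Then Σₘ p(m) = 1, and each p(m) is either exactly 0 or has strictly positive real significant part. -/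
/-! Writing `φ = M_m ψ`, the adjoint relation `⟨ψ, Aᴴ A ψ⟩ = ⟨A ψ, A ψ⟩` gives
`p(m) = Σⱼ φⱼ* φⱼ`. A single term with `φⱼ = z + tε` is `|z|² + (z̄t + t̄z)ε`: its significant part
is `|z|²`, and the whole term vanishes as soon as `z = 0`. Hence either every `φⱼ` is
infinitesimal and `p(m) = 0` exactly, or the significant part of `p(m)` is a positive real.
The normalisation `Σₘ p(m) = 1` is linearity together with the completeness relation. -/

open DualNumber TrivSqZeroExt Matrix

/-- Componentwise conjugation makes the dual-complex numbers a star ring, so that Mathlib's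
conjugate-transpose lemmas apply; the underlying `Star` is the componentwise one given above. -/
noncomputable abbrev dualComplexStarRing : StarRing ℂ[ε] where
  star_involutive w := by ext <;> simp [star]
  star_mul a b := by ext <;> simp [star] <;> ring
  star_add a b := by ext <;> simp [star]

/-- The adjoint relation `⟨ψ, Aᴴ A ψ⟩ = ⟨A ψ, A ψ⟩`. -/
lemma dualComplex_inner_gram {n : ℕ} (A : Matrix (Fin n) (Fin n) ℂ[ε]) (ψ : Fin n → ℂ[ε]) :
    ∑ k, star (ψ k) * ((Aᴴ * A).mulVec ψ) k = ∑ j, star (A.mulVec ψ j) * A.mulVec ψ j := by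
  let _ := dualComplexStarRing
  change star ψ ⬝ᵥ ((Aᴴ * A) *ᵥ ψ) = star (A *ᵥ ψ) ⬝ᵥ (A *ᵥ ψ)
  rw [← mulVec_mulVec, dotProduct_mulVec, star_mulVec]

lemma dualComplex_fst_star_mul_self (w : ℂ[ε]) :
    (star w * w).fst = (Complex.normSq w.fst : ℂ) := by
  simp [star, Complex.normSq_eq_conj_mul_self]

lemma dualComplex_star_mul_self_eq_zero {w : ℂ[ε]} (hw : w.fst = 0) : star w * w = 0 := by
  ext <;> simp [star, hw]

/-- **Self-consistency of dual-complex measurement.**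
If `{M_m}` satisfies the completeness relation `Σₘ M_mᴴ·M_m = I` and `ψ` is a
dual-complex state (`⟨ψ, ψ⟩ = 1`), then the probabilities
`p(m) = ⟨ψ, M_mᴴ·M_m·ψ⟩` sum to `1`, and each `p(m)` is either exactly `0` or
has strictly positive real significant part. -/
theorem dualComplex_measurement_consistency (n d : ℕ)
    (M : Fin d → Matrix (Fin n) (Fin n) ℂ[ε])
    (hM : ∑ m, (M m)ᴴ * M m = 1)
    (ψ : Fin n → ℂ[ε]) (hψ : ∑ k, star (ψ k) * ψ k = 1) :
    (∑ m, ∑ k, star (ψ k) * (((M m)ᴴ * M m).mulVec ψ) k) = 1 ∧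
      ∀ m, (∑ k, star (ψ k) * (((M m)ᴴ * M m).mulVec ψ) k) = 0 ∨
        ((∑ k, star (ψ k) * (((M m)ᴴ * M m).mulVec ψ) k).fst.im = 0 ∧
          0 < (∑ k, star (ψ k) * (((M m)ᴴ * M m).mulVec ψ) k).fst.re) := by
  constructor
  · calc ∑ m, ∑ k, star (ψ k) * (((M m)ᴴ * M m).mulVec ψ) k
        = ∑ k, star (ψ k) * ((∑ m, (M m)ᴴ * M m).mulVec ψ) k := by
          rw [Finset.sum_comm]
          simp only [sum_mulVec, Finset.sum_apply, Finset.mul_sum]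
      _ = 1 := by rw [hM, one_mulVec, hψ]
  · intro m
    rw [dualComplex_inner_gram]
    set φ := (M m).mulVec ψ
    have hfst : (∑ j, star (φ j) * φ j).fst = ((∑ j, Complex.normSq (φ j).fst : ℝ) : ℂ) := by
      rw [fst_sum, Complex.ofReal_sum]
      exact Finset.sum_congr rfl fun j _ => dualComplex_fst_star_mul_self (φ j)
    by_cases h : ∀ j, (φ j).fst = 0
    · exact Or.inl (Finset.sum_eq_zero fun j _ => dualComplex_star_mul_self_eq_zero (h j))
    · obtain ⟨j, hj⟩ := not_forall.mp h
      rw [hfst]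
      refine Or.inr ⟨Complex.ofReal_im _, ?_⟩
      rw [Complex.ofReal_re]
      exact Finset.sum_pos' (fun i _ => Complex.normSq_nonneg (φ i).fst)
        ⟨j, Finset.mem_univ j, Complex.normSq_pos.mpr hj⟩
end
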